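/- Let Ω₁ ⊆ ℝ^p and Ω₂ ⊆ ℝ^q (p, q ≥ 2) be bounded connected open sets, and let u(x,y) be a separately subharmonic function on a neighborhood of the closure of Ω₁ × Ω₂. If u ≤ M on the distinguished boundary ∂Ω₁ × ∂Ω₂ for some constant M, then u ≤ M on the closure of Ω₁ × Ω₂. -/

import Mathlib

open MeasureTheory Metric Filter Topology Set

noncomputable section

variable {E : Type*} [NormedAddCommGroup E] [InnerProductSpace ℝ E]
  [MeasurableSpace E] [BorelSpace E]

/-- The mean of an extended-real-valued function over the sphere of center `x`
and radius `r`, with respect to `d`-dimensional Hausdorff measure, defined as the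
infimum of the averages of the truncations `v ⊔ (-n)`. -/
def sphereMean (d : ℝ) (v : E → EReal) (x : E) (r : ℝ) : EReal :=
  ⨅ n : ℕ, ((⨍ y in sphere x r, ((v y) ⊔ (-(n : ℝ) : EReal)).toReal ∂ μH[d] : ℝ) : EReal)

/-- `v : E → [-∞, ∞)` is subharmonic on `U` (with sphere dimension `d = N - 1`):
upper semicontinuous on `U`, `< ∞`, not identically `-∞`, and satisfying the
sub-mean value inequality on spheres of closed balls contained in `U`. -/
def IsSubharmonicOn (d : ℝ) (v : E → EReal) (U : Set E) : Prop :=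
  UpperSemicontinuousOn v U ∧ (∀ x ∈ U, v x < ⊤) ∧ (∃ x ∈ U, v x ≠ ⊥) ∧
    ∀ x r, 0 < r → closedBall x r ⊆ U → v x ≤ sphereMean d v x r

/-- `u : E → (-∞, ∞]` is superharmonic on `U` iff `-u` is subharmonic on `U`. -/
def IsSuperharmonicOn (d : ℝ) (u : E → EReal) (U : Set E) : Prop :=
  IsSubharmonicOn d (fun x => -(u x)) U

/-- A set is polar if it is contained in the `-∞`-set of a function subharmonic
on a neighborhood of it. -/
def IsPolar (d : ℝ) (S : Set E) : Prop :=
  ∃ U : Set E, IsOpen U ∧ S ⊆ U ∧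
    ∃ v : E → EReal, IsSubharmonicOn d v U ∧ ∀ x ∈ S, v x = ⊥

/-- The fine topology: the coarsest topology making every globally defined
subharmonic function continuous. -/
def fineTopology (E : Type*) [NormedAddCommGroup E] [InnerProductSpace ℝ E]
    [MeasurableSpace E] [BorelSpace E] (d : ℝ) : TopologicalSpace E :=
  ⨅ (v : E → EReal) (_ : IsSubharmonicOn d v Set.univ),
    TopologicalSpace.induced v inferInstance

/-- A set `A` is thin at `ζ` if `ζ` is not a fine limit point of `A`. -/
def ThinAt (d : ℝ) (A : Set E) (ζ : E) : Prop :=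
  ζ ∉ @closure E (fineTopology E d) (A \ {ζ})

/-- A real-valued function is harmonic on `U` if it is continuous on `U` and
satisfies the mean value equality on spheres of closed balls contained in `U`. -/
def IsHarmonicOn (d : ℝ) (h : E → ℝ) (U : Set E) : Prop :=
  ContinuousOn h U ∧ ∀ x r, 0 < r → closedBall x r ⊆ U →
    h x = ⨍ y in sphere x r, h y ∂ μH[d]

/-- An open set is Greenian if it carries a positive superharmonic function that
is not harmonic (i.e. a potential-like function exists). -/
def IsGreenian (d : ℝ) (ω : Set E) : Prop :=
  ω.Nonempty ∧ ∃ u : E → EReal, IsSuperharmonicOn d u ω ∧ (∀ x ∈ ω, 0 < u x) ∧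
    ¬ ∃ h : E → ℝ, IsHarmonicOn d h ω ∧ ∀ x ∈ ω, u x = (h x : EReal)

/-- The Perron upper class of a boundary function `f` on `ω`. -/
def upperClass (d : ℝ) (ω : Set E) (f : E → EReal) : Set (E → EReal) :=
  {u | IsSuperharmonicOn d u ω ∧ (∃ c : ℝ, ∀ x ∈ ω, (c : EReal) ≤ u x) ∧
    ∀ ζ ∈ frontier ω, f ζ ≤ Filter.liminf u (nhdsWithin ζ ω)}

/-- The upper Perron–Wiener–Brelot solution of the Dirichlet problem on `ω`
with boundary data `f`. -/
def PWB (d : ℝ) (ω : Set E) (f : E → EReal) (x : E) : EReal :=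
  ⨅ u ∈ upperClass d ω f, u x

/-- A boundary point `ζ` of `ω` is regular for the Dirichlet problem if for every
continuous boundary data the PWB solution attains the boundary value at `ζ`. -/
def IsRegularBoundaryPoint (d : ℝ) (ω : Set E) (ζ : E) : Prop :=
  ζ ∈ frontier ω ∧ ∀ f : E → ℝ, ContinuousOn f (frontier ω) →
    Filter.Tendsto (PWB d ω (fun y => (f y : EReal))) (nhdsWithin ζ ω) (nhds ((f ζ : EReal)))

/-- `A ⊆ ∂ω` is negligible for `ω` if it has harmonic measure zero, harmonic
measure being the PWB solution for the indicator boundary data. -/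
def IsNegligible (d : ℝ) (ω A : Set E) : Prop :=
  ∀ x ∈ ω, PWB d ω (fun y => ((A.indicator (fun _ => (1 : ℝ)) y : ℝ) : EReal)) x = 0


noncomputable instance prodL2MeasurableSpace (p q : ℕ) :
    MeasurableSpace (WithLp 2 (EuclideanSpace ℝ (Fin p) × EuclideanSpace ℝ (Fin q))) := borel _

instance prodL2BorelSpace (p q : ℕ) :
    BorelSpace (WithLp 2 (EuclideanSpace ℝ (Fin p) × EuclideanSpace ℝ (Fin q))) := ⟨rfl⟩

/-- The product `ℝ^p × ℝ^q` with its Euclidean (L²) structure. -/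
abbrev ProdSpace (p q : ℕ) := WithLp 2 (EuclideanSpace ℝ (Fin p) × EuclideanSpace ℝ (Fin q))

/-- The point `(a, b)` of `ℝ^p × ℝ^q`. -/
def prodMk {p q : ℕ} (a : EuclideanSpace ℝ (Fin p)) (b : EuclideanSpace ℝ (Fin q)) :
    ProdSpace p q := (WithLp.equiv 2 _).symm (a, b)

/-- The product set `Ω₁ × Ω₂` inside `ℝ^p × ℝ^q`. -/
def prodSet {p q : ℕ} (Ω₁ : Set (EuclideanSpace ℝ (Fin p)))
    (Ω₂ : Set (EuclideanSpace ℝ (Fin q))) : Set (ProdSpace p q) :=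
  (WithLp.equiv 2 _) ⁻¹' (Ω₁ ×ˢ Ω₂)

/-- `u` is separately subharmonic on `U ⊆ ℝ^p × ℝ^q` if all its partial functions
are subharmonic on the corresponding slices. -/
def SeparatelySubharmonicOn {p q : ℕ} (u : ProdSpace p q → EReal)
    (U : Set (ProdSpace p q)) : Prop :=
  ∀ a b, prodMk a b ∈ U →
    IsSubharmonicOn ((p : ℝ) - 1) (fun x => u (prodMk x b)) {x | prodMk x b ∈ U} ∧
    IsSubharmonicOn ((q : ℝ) - 1) (fun y => u (prodMk a y)) {y | prodMk a y ∈ U}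
end

/-!
Applying the one-variable maximum principle first in `y`, with `x ∈ ∂Ω₁` fixed, and then in `x`
carries the bound from `∂Ω₁ × ∂Ω₂` to `∂Ω₁ × closure Ω₂` and on to the closure of the product.

For the one-variable principle, among the points of the compact set `closure Ω` where `v` attains
its maximum choose one, `x`, that is extremal in a direction `e`. If the maximum exceeds the
boundary bound then `x` is interior, and on a small sphere around `x` we have `v ≤ v x`, strictly on
the hemisphere facing `e`. Spheres have finite Hausdorff measure (being covered by two compact
stereographic charts) and hemispheres positive measure (they project onto a ball of `eᗮ`), so the
spherical mean is less than `v x`, against the sub-mean value inequality.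
-/

open Module
open scoped Pointwise RealInnerProductSpace

section Average

variable {X : Type*} [MeasurableSpace X] {μ : Measure X}

theorem average_lt_of_ae_le_of_measure_lt_pos [IsFiniteMeasure μ] {f : X → ℝ} {m : ℝ}
    (hf : Integrable f μ) (hle : ∀ᵐ y ∂μ, f y ≤ m) (hlt : 0 < μ {y | f y < m}) :
    ⨍ y, f y ∂μ < m := by
  have hμ : 0 < μ.real univ := ENNReal.toReal_pos
    (hlt.trans_le (measure_mono (subset_univ _))).ne' (measure_ne_top _ _)
  have hgap : 0 < ∫ y, (m - f y) ∂μ := by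
    rw [integral_pos_iff_support_of_nonneg_ae (hle.mono fun y hy ↦ sub_nonneg.mpr hy)
      ((integrable_const m).sub hf)]
    exact hlt.trans_le (measure_mono fun y hy ↦ (sub_pos.mpr hy).ne')
  rw [integral_sub (integrable_const m) hf, integral_const, smul_eq_mul] at hgap
  rw [average_eq, smul_eq_mul, inv_mul_lt_iff₀ hμ]
  exact sub_pos.mp hgap

theorem aemeasurable_restrict_of_upperSemicontinuousOn [TopologicalSpace X] [BorelSpace X]
    {Y : Type*} [TopologicalSpace Y] [MeasurableSpace Y] [BorelSpace Y] [LinearOrder Y]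
    [OrderTopology Y] [SecondCountableTopology Y] {v : X → Y} {s : Set X}
    (hv : UpperSemicontinuousOn v s) (hs : MeasurableSet s) : AEMeasurable v (μ.restrict s) :=
  (aemeasurable_restrict_iff_comap_subtype hs).mpr
    (upperSemicontinuousOn_iff_restrict.mpr hv).measurable.aemeasurable

end Average

section Truncation

variable {a : EReal} {c m : ℝ}

theorem coe_toReal_sup_coe (ha : a ≠ ⊤) : ((a ⊔ c).toReal : EReal) = a ⊔ c :=
  EReal.coe_toReal (max_lt ha.lt_top (EReal.coe_lt_top c)).ne
    (ne_bot_of_le_ne_bot (EReal.coe_ne_bot c) le_sup_right)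

theorem toReal_sup_coe_mem_Icc (hc : c ≤ m) (ha : a ≤ m) : (a ⊔ c).toReal ∈ Icc c m := by
  rw [mem_Icc, ← EReal.coe_le_coe_iff, ← EReal.coe_le_coe_iff (y := m),
    coe_toReal_sup_coe (ne_top_of_le_ne_top (EReal.coe_ne_top m) ha)]
  exact ⟨le_sup_right, sup_le ha (EReal.coe_le_coe_iff.mpr hc)⟩

theorem toReal_sup_coe_lt (hc : c < m) (ha : a < m) : (a ⊔ c).toReal < m := by
  rw [← EReal.coe_lt_coe_iff, coe_toReal_sup_coe ha.ne_top]
  exact max_lt ha (EReal.coe_lt_coe_iff.mpr hc)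

end Truncation

theorem sphereMean_lt_of_le_of_measure_lt_pos {E : Type*} [NormedAddCommGroup E]
    [InnerProductSpace ℝ E] [MeasurableSpace E] [BorelSpace E] {d r m : ℝ} {v : E → EReal} {x : E}
    (hfin : μH[d] (sphere x r) < ⊤) (hv : AEMeasurable v (μH[d].restrict (sphere x r)))
    (hle : ∀ y ∈ sphere x r, v y ≤ m) (hlt : 0 < μH[d] {y ∈ sphere x r | v y < m}) :
    sphereMean d v x r < m := by
  obtain ⟨N, hN⟩ := exists_nat_gt (-m)
  replace hN : -(N : ℝ) < m := neg_lt.mp hN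
  have hS : MeasurableSet (sphere x r) := isClosed_sphere.measurableSet
  have : Fact (μH[d] (sphere x r) < ⊤) := ⟨hfin⟩
  have hbounds : ∀ᵐ y ∂μH[d].restrict (sphere x r),
      (v y ⊔ (-(N : ℝ) : ℝ)).toReal ∈ Icc (-(N : ℝ)) m :=
    ae_restrict_of_forall_mem hS fun y hy ↦ toReal_sup_coe_mem_Icc hN.le (hle y hy)
  refine (iInf_le _ N).trans_lt (EReal.coe_lt_coe_iff.mpr ?_)
  refine average_lt_of_ae_le_of_measure_lt_pos
    (.of_mem_Icc _ _ (hv.sup aemeasurable_const).ereal_toReal hbounds)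
    (hbounds.mono fun y hy ↦ hy.2) ?_
  rw [Measure.restrict_apply' hS]
  exact hlt.trans_le (measure_mono fun y hy ↦ ⟨toReal_sup_coe_lt hN hy.2, hy.1⟩)

theorem hausdorffMeasure_image_lt_top_of_contDiff {E F : Type*}
    [NormedAddCommGroup E] [NormedSpace ℝ E] [FiniteDimensional ℝ E] [MeasurableSpace E]
    [BorelSpace E] [NormedAddCommGroup F] [NormedSpace ℝ F] [MeasurableSpace F] [BorelSpace F]
    {f : E → F} (hf : ContDiff ℝ 1 f) {K : Set E} (hK : IsCompact K) :
    μH[(finrank ℝ E : ℝ)] (f '' K) < ⊤ := by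
  obtain ⟨C, hC⟩ := hf.locallyLipschitz.locallyLipschitzOn.exists_lipschitzOnWith_of_compact hK
  refine (hC.hausdorffMeasure_image_le (Nat.cast_nonneg _)).trans_lt ?_
  rw [ENNReal.rpow_natCast]
  exact ENNReal.mul_lt_top (ENNReal.pow_lt_top ENNReal.coe_lt_top) hK.measure_lt_top

theorem ball_subset_orthogonalProjectionOnto_image_hemisphere {E : Type*} [NormedAddCommGroup E]
    [InnerProductSpace ℝ E] {e : E} (he : ‖e‖ = 1) (x : E) (r : ℝ) :
    ball ((ℝ ∙ e)ᗮ.orthogonalProjectionOnto x) r ⊆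
      (ℝ ∙ e)ᗮ.orthogonalProjectionOnto '' {y ∈ sphere x r | ⟪e, x⟫ < ⟪e, y⟫} := by
  intro t ht
  set P := (ℝ ∙ e)ᗮ.orthogonalProjectionOnto
  set w := t - P x
  have hw : ‖w‖ < r := mem_ball_iff_norm.mp ht
  have hgap : 0 < r ^ 2 - ‖w‖ ^ 2 := sub_pos.mpr (by gcongr)
  set h := √(r ^ 2 - ‖w‖ ^ 2)
  have hew : ⟪e, (w : E)⟫ = 0 := Submodule.mem_orthogonal_singleton_iff_inner_right.mp w.2
  have hPe : P e = 0 := Submodule.orthogonalProjectionOnto_orthogonalComplement_singleton_eq_zero e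
  have hPw : P w = w := Submodule.orthogonalProjectionOnto_mem_subspace_eq_self w
  have hnorm : ‖(w : E) + h • e‖ ^ 2 = r ^ 2 := by
    rw [norm_add_sq_real, inner_smul_right, real_inner_comm, hew, norm_smul, he, mul_one,
      Real.norm_eq_abs, sq_abs, Real.sq_sqrt hgap.le, Submodule.coe_norm]
    ring
  refine ⟨x + (w + h • e), ⟨?_, ?_⟩, ?_⟩
  · rw [mem_sphere_iff_norm, add_sub_cancel_left]
    exact (sq_eq_sq₀ (norm_nonneg _) ((norm_nonneg w).trans hw.le)).mp hnorm
  · rw [inner_add_right, inner_add_right, hew, inner_smul_right, real_inner_self_eq_norm_sq, he]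
    linarith [Real.sqrt_pos.mpr hgap]
  · rw [map_add, map_add, map_smul, hPw, hPe, smul_zero, add_zero, add_sub_cancel]

section Sphere

variable {E : Type*} [NormedAddCommGroup E] [InnerProductSpace ℝ E] [MeasurableSpace E]
  [BorelSpace E] {n : ℕ} [Fact (finrank ℝ E = n + 1)]

theorem hausdorffMeasure_unitHemisphere_lt_top {e : E} (he : ‖e‖ = 1) :
    μH[(n : ℝ)] {y ∈ sphere (0 : E) 1 | ⟪e, y⟫ ≤ 0} < ⊤ := by
  have : FiniteDimensional ℝ E := .of_fact_finrank_eq_succ n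
  set H := {y ∈ sphere (0 : E) 1 | ⟪e, y⟫ ≤ 0}
  have hH : IsCompact H := (isCompact_sphere 0 1).inter_right
    (isClosed_le (f := fun y ↦ ⟪e, y⟫) (by fun_prop) continuous_const)
  have hstereo : IsCompact (stereoToFun e '' H) := hH.image_of_continuousOn
    (continuousOn_stereoToFun.mono fun y hy ↦ (hy.2.trans_lt one_pos).ne)
  have hchart : ContDiff ℝ 1 fun w : (ℝ ∙ e)ᗮ ↦ stereoInvFunAux e w :=
    contDiff_stereoInvFunAux.comp (ℝ ∙ e)ᗮ.subtypeL.contDiff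
  have hcover : H ⊆ (fun w : (ℝ ∙ e)ᗮ ↦ stereoInvFunAux e w) '' (stereoToFun e '' H) := by
    rw [image_image]
    refine fun y hy ↦ ⟨y, hy, congrArg Subtype.val (stereo_left_inv he (x := ⟨y, hy.1⟩) ?_)⟩
    exact fun hye : y = e ↦ absurd hy.2 (by simp [hye, he])
  have hfin := hausdorffMeasure_image_lt_top_of_contDiff hchart hstereo
  rw [Submodule.finrank_orthogonal_span_singleton (n := n) (norm_ne_zero_iff.mp (he ▸ one_ne_zero))]
    at hfin
  exact (measure_mono hcover).trans_lt hfin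

theorem hausdorffMeasure_sphere_lt_top (x : E) {r : ℝ} (hr : 0 < r) :
    μH[(n : ℝ)] (sphere x r) < ⊤ := by
  have : Nontrivial E := nontrivial_of_finrank_eq_succ (Fact.out : finrank ℝ E = n + 1)
  obtain ⟨e, he⟩ := exists_norm_eq E zero_le_one
  have hunit : μH[(n : ℝ)] (sphere (0 : E) 1) < ⊤ := by
    refine (measure_mono fun y hy ↦ ?_).trans_lt (measure_union_lt_top
      (hausdorffMeasure_unitHemisphere_lt_top he)
      (hausdorffMeasure_unitHemisphere_lt_top ((norm_neg e).trans he)))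
    exact (le_total ⟪e, y⟫ 0).imp (⟨hy, ·⟩) fun h ↦ ⟨hy, by simpa [inner_neg_left] using h⟩
  have hscale : x +ᵥ r • sphere (0 : E) 1 = sphere x r := by
    rw [_root_.smul_sphere _ _ zero_le_one, vadd_sphere]
    simp [abs_of_pos hr]
  rw [← hscale, measure_vadd, Measure.hausdorffMeasure_smul₀ n.cast_nonneg hr.ne']
  exact ENNReal.mul_lt_top ENNReal.coe_lt_top hunit

theorem hausdorffMeasure_hemisphere_pos {e : E} (he : ‖e‖ = 1) (x : E) {r : ℝ} (hr : 0 < r) :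
    0 < μH[(n : ℝ)] {y ∈ sphere x r | ⟪e, x⟫ < ⟪e, y⟫} := by
  have : FiniteDimensional ℝ E := .of_fact_finrank_eq_succ n
  have hball := measure_ball_pos μH[(finrank ℝ (ℝ ∙ e)ᗮ : ℝ)]
    ((ℝ ∙ e)ᗮ.orthogonalProjectionOnto x) hr
  rw [Submodule.finrank_orthogonal_span_singleton (n := n)
    (norm_ne_zero_iff.mp (he ▸ one_ne_zero))] at hball
  exact hball.trans_le <|
    (measure_mono (ball_subset_orthogonalProjectionOnto_image_hemisphere he x r)).trans
    (hausdorffMeasure_orthogonalProjectionOnto_le _ _ _ n.cast_nonneg)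

end Sphere

theorem exists_isMaxOn_forall_lt_of_lt {X Y Z : Type*} [TopologicalSpace X] [LinearOrder Y]
    [LinearOrder Z] [TopologicalSpace Z] [ClosedIciTopology Z]
    {K : Set X} (hK : IsCompact K) (hne : K.Nonempty) {v : X → Y} (hv : UpperSemicontinuousOn v K)
    {f : X → Z} (hf : ContinuousOn f K) :
    ∃ x ∈ K, IsMaxOn v K x ∧ ∀ y ∈ K, f x < f y → v y < v x := by
  obtain ⟨z, hz, hmax⟩ := hv.exists_isMaxOn hne hK
  obtain ⟨x, ⟨hx, hzx⟩, hfx⟩ := (hv.isCompact_inter_preimage_Ici hK (v z)).exists_isMaxOn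
    ⟨z, hz, le_rfl⟩ (hf.mono inter_subset_left)
  refine ⟨x, hx, fun y hy ↦ (hmax hy).trans hzx, fun y hy hxy ↦ ?_⟩
  by_contra! hvy
  exact hxy.not_ge (hfx ⟨hy, hzx.trans hvy⟩)

theorem IsSubharmonicOn.le_of_le_on_frontier {E : Type*} [NormedAddCommGroup E]
    [InnerProductSpace ℝ E] [MeasurableSpace E] [BorelSpace E] {p : ℕ} (hE : finrank ℝ E = p)
    (hp : 1 ≤ p) {v : E → EReal} {U Ω : Set E} (hv : IsSubharmonicOn (p - 1) v U)
    (hΩ : Bornology.IsBounded Ω) (hU : closure Ω ⊆ U) {M : EReal} (hM : ∀ ζ ∈ frontier Ω, v ζ ≤ M) :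
    ∀ x ∈ closure Ω, v x ≤ M := by
  obtain ⟨n, rfl⟩ := Nat.exists_eq_add_of_le' hp
  rw [Nat.cast_add_one, add_sub_cancel_right] at hv
  have : Fact (finrank ℝ E = n + 1) := ⟨hE⟩
  have : FiniteDimensional ℝ E := .of_fact_finrank_eq_succ n
  have : Nontrivial E := nontrivial_of_finrank_eq_succ hE
  obtain ⟨e, he⟩ := exists_norm_eq E zero_le_one
  obtain ⟨husc, htop, -, hmean⟩ := hv
  replace husc := husc.mono hU
  by_contra! ⟨z, hz, hzM⟩
  obtain ⟨x, hx, hmax, hstrict⟩ := exists_isMaxOn_forall_lt_of_lt hΩ.isCompact_closure ⟨z, hz⟩ husc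
    (f := fun y ↦ ⟪e, y⟫) (by fun_prop)
  have hMx : M < v x := hzM.trans_le (hmax hz)
  have hxΩ : x ∈ interior Ω := by
    by_contra hxn
    exact hMx.not_ge (hM x ⟨hx, hxn⟩)
  obtain ⟨r, hr, hball⟩ := nhds_basis_closedBall.mem_iff.mp (isOpen_interior.mem_nhds hxΩ)
  replace hball : closedBall x r ⊆ closure Ω := hball.trans (interior_subset.trans subset_closure)
  have hsphere : sphere x r ⊆ closure Ω := sphere_subset_closedBall.trans hball
  have hcoe : ((v x).toReal : EReal) = v x := EReal.coe_toReal (htop x (hU hx)).ne hMx.ne_bot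
  have hlt : sphereMean n v x r < (v x).toReal := by
    refine sphereMean_lt_of_le_of_measure_lt_pos (hausdorffMeasure_sphere_lt_top x hr)
      (aemeasurable_restrict_of_upperSemicontinuousOn (husc.mono hsphere)
        isClosed_sphere.measurableSet) (fun y hy ↦ hcoe.symm ▸ hmax (hsphere hy)) ?_
    rw [hcoe]
    exact (hausdorffMeasure_hemisphere_pos he x hr).trans_le
      (measure_mono fun y hy ↦ ⟨hy.1, hstrict y (hsphere hy.1) hy.2⟩)
  exact (hmean x r hr (hball.trans hU)).not_gt (hcoe ▸ hlt)

theorem closure_prodSet {p q : ℕ} (Ω₁ : Set (EuclideanSpace ℝ (Fin p)))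
    (Ω₂ : Set (EuclideanSpace ℝ (Fin q))) :
    closure (prodSet Ω₁ Ω₂) = prodSet (closure Ω₁) (closure Ω₂) := by
  unfold prodSet
  rw [← closure_prod_eq]
  exact ((WithLp.homeomorphProd 2 _ _).preimage_closure _).symm

theorem separately_subharmonic_le_of_le_on_distinguished_boundary_general {p q : ℕ}
    (hp : 1 ≤ p) (hq : 1 ≤ q)
    {Ω₁ : Set (EuclideanSpace ℝ (Fin p))} {Ω₂ : Set (EuclideanSpace ℝ (Fin q))}
    (hΩ₁ : Bornology.IsBounded Ω₁) (hΩ₂ : Bornology.IsBounded Ω₂)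
    {U : Set (ProdSpace p q)} (hU : closure (prodSet Ω₁ Ω₂) ⊆ U)
    {u : ProdSpace p q → EReal} (hu : SeparatelySubharmonicOn u U)
    {M : EReal} (hM : ∀ ζ ∈ frontier Ω₁, ∀ η ∈ frontier Ω₂, u (prodMk ζ η) ≤ M) :
    ∀ z ∈ closure (prodSet Ω₁ Ω₂), u z ≤ M := by
  rw [closure_prodSet] at hU ⊢
  have hmem {a b} (ha : a ∈ closure Ω₁) (hb : b ∈ closure Ω₂) : prodMk a b ∈ U := hU ⟨ha, hb⟩
  have hside {ζ} (hζ : ζ ∈ frontier Ω₁) {y} (hy : y ∈ closure Ω₂) : u (prodMk ζ y) ≤ M :=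
    have hζ' := frontier_subset_closure hζ
    (hu ζ y (hmem hζ' hy)).2.le_of_le_on_frontier finrank_euclideanSpace_fin hq hΩ₂
      (fun _ hb ↦ hmem hζ' hb) (hM ζ hζ) y hy
  rintro z ⟨hx, hy⟩
  exact (hu z.fst z.snd (hmem hx hy)).1.le_of_le_on_frontier finrank_euclideanSpace_fin hp hΩ₁
    (fun _ ha ↦ hmem ha hy) (fun _ hζ ↦ hside hζ hy) z.fst hx

/-- maximum principle relative to the distinguished boundary for
separately subharmonic functions. -/
theorem separately_subharmonic_le_of_le_on_distinguished_boundary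
    (p q : ℕ) (hp : 2 ≤ p) (hq : 2 ≤ q)
    (Ω₁ : Set (EuclideanSpace ℝ (Fin p))) (Ω₂ : Set (EuclideanSpace ℝ (Fin q)))
    (hΩ₁open : IsOpen Ω₁) (hΩ₂open : IsOpen Ω₂)
    (hΩ₁conn : IsConnected Ω₁) (hΩ₂conn : IsConnected Ω₂)
    (hΩ₁bdd : Bornology.IsBounded Ω₁) (hΩ₂bdd : Bornology.IsBounded Ω₂)
    (U : Set (ProdSpace p q)) (hUopen : IsOpen U)
    (hUnbhd : closure (prodSet Ω₁ Ω₂) ⊆ U)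
    (u : ProdSpace p q → EReal) (hu : SeparatelySubharmonicOn u U)
    (M : ℝ) (hM : ∀ ζ ∈ frontier Ω₁, ∀ η ∈ frontier Ω₂, u (prodMk ζ η) ≤ (M : EReal)) :
    ∀ z ∈ closure (prodSet Ω₁ Ω₂), u z ≤ (M : EReal) :=
  separately_subharmonic_le_of_le_on_distinguished_boundary_general (one_le_two.trans hp)
    (one_le_two.trans hq) hΩ₁bdd hΩ₂bdd hUnbhd hu hM
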